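/- arXiv:0807.1628 — 2 statements merged into one kernel-verified Lean document; each statement's English description precedes it below -/
import Mathlib

section
/- Let q > 2 and p = q/(q−1). For every positive integer N there exists ν₀ = ν₀(N) such that for every integer ν ≥ ν₀ the following holds. Define λ_s(t) = ∏_{j=1}^{N} (1 + 2sN^{−1/q} cos(ν^j t)) and X(t) = N^{−1/p} ∑_{j=1}^{N} cos(ν^j t). Then for every α > 0 and every s ∈ (2/5, 1/2), (1/2π) ∫_{{t ∈ 𝕋 : |X(t) − s| > α}} λ_s(t) dt ≤ 3·exp(−(1/8)·α²·N^{2/p − 1}). -/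
/-! The proof is an exact Chernoff bound, valid for every `ν ≥ 3`.

Write `b = s N^{-1/q} ∈ [0, 1/2]` and `X_j(t) = cos (νʲ t)`. Convexity of `exp` gives
`exp (μ X_j) ≤ cosh μ + X_j sinh μ`, hence `λ_s exp (μ ∑ X_j)` is at most the product of the
trigonometric polynomials `(1 + 2 b X_j) (cosh μ + X_j sinh μ)`, of degree two in `νʲ t`. Since
`ν ≥ 3`, the integral of this product is the product of the integrals, `(cosh μ + b sinh μ)^N`
(`integral_prod_factor`): the factor of lowest frequency contributes only its mean, because the
others are invariant under a translation that multiplies each of its non-constant characters by a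
number different from `1` (`integral_re_fourier_mul_eq_zero`).

Next, `cosh μ + b sinh μ ≤ exp (b μ + μ²)` (`cosh_add_mul_sinh_le`), which bounds each of the
two tails by `exp (N μ² - μ α N^{1/p})` for `μ > 0`; the choice `μ = α N^{1/p} / (2N)` gives
`2 exp (-α² N^{2/p-1} / 4)` in total. -/

open MeasureTheory Real Filter Topology

noncomputable section

local notation "𝕋" => AddCircle (2 * Real.pi)

instance : Fact (0 < 2 * Real.pi) := ⟨by positivity⟩

/-- `φ : 𝕋 → ℂ` is a `C^∞` function on the circle (i.e. its lift to `ℝ` is smooth). -/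
def SmoothCircle (φ : 𝕋 → ℂ) : Prop :=
  ContDiff ℝ (⊤ : ℕ∞) (fun x : ℝ => φ (x : 𝕋))

/-- `c : ℤ → ℂ` is the coefficient sequence of a (Schwartz) distribution supported by the
compact set `K`: for every `C^∞` function `φ` vanishing on an open neighbourhood of `K`,
one has `∑_{n ∈ ℤ} c(n) · φ̂(−n) = 0`. -/
def IsDistCoeffOn (c : ℤ → ℂ) (K : Set 𝕋) : Prop :=
  ∀ φ : 𝕋 → ℂ, SmoothCircle φ →
    (∃ U : Set 𝕋, IsOpen U ∧ K ⊆ U ∧ ∀ t ∈ U, φ t = 0) →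
    ∑' n : ℤ, c n * fourierCoeff φ (-n) = 0

/-- The Fourier coefficients `μ̂(n) = ∫_𝕋 e^{−int} dμ(t)` of the finite complex Borel
measure `μ` given in polar form `dμ = w dP`, where `P` is a finite positive measure and
`w` is a unimodular density (so that `|μ| = P`). -/
def mFourier (P : Measure 𝕋) (w : 𝕋 → ℂ) (n : ℤ) : ℂ :=
  ∫ t, fourier (-n) t * w t ∂P

/-! ### Characters of the circle -/

lemma fourier_add_arg (n : ℤ) (t h : 𝕋) :
    fourier n (t + h) = fourier n t * fourier n h := by
  simp [fourier_apply, smul_add, AddCircle.toCircle_add]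

lemma abs_re_fourier_le_one (n : ℤ) (t : 𝕋) : |(fourier n t).re| ≤ 1 := by
  refine (Complex.abs_re_le_norm _).trans ?_
  rw [fourier_apply]
  exact (Circle.norm_coe _).le

lemma sq_re_fourier (n : ℤ) (t : 𝕋) :
    (fourier n t).re ^ 2 = (1 + (fourier (2 * n) t).re) / 2 := by
  have h1 : fourier (2 * n) t = fourier n t * fourier n t := by
    rw [← fourier_add, ← two_mul n]
  have h2 : Complex.normSq (fourier n t) = 1 := by
    rw [fourier_apply]; exact Circle.normSq_coe _
  rw [Complex.normSq_apply] at h2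
  rw [h1, Complex.mul_re]
  linarith

lemma continuous_re_fourier (n : ℤ) : Continuous fun t : 𝕋 => (fourier n t).re :=
  Complex.continuous_re.comp (fourier n).continuous

lemma integrable_of_continuous {f : 𝕋 → ℝ} (hf : Continuous f) :
    Integrable f AddCircle.haarAddCircle :=
  hf.integrable_of_hasCompactSupport (HasCompactSupport.of_compactSpace f)

/-- A function invariant under translation by `h` is orthogonal to every character that is
nontrivial at `h`. -/
lemma integral_re_fourier_mul_eq_zero (n : ℤ) (h : 𝕋) (hn : fourier n h ≠ 1) (H : 𝕋 → ℝ)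
    (hc : Continuous H) (hH : ∀ t, H (t + h) = H t) :
    ∫ t, (fourier n t).re * H t ∂AddCircle.haarAddCircle = 0 := by
  have hcont : Continuous fun t : 𝕋 => fourier n t * (H t : ℂ) :=
    (fourier n).continuous.mul (Complex.continuous_ofReal.comp hc)
  have hint : Integrable (fun t : 𝕋 => fourier n t * (H t : ℂ)) AddCircle.haarAddCircle :=
    hcont.integrable_of_hasCompactSupport (HasCompactSupport.of_compactSpace _)
  have key : ∫ t, fourier n t * (H t : ℂ) ∂AddCircle.haarAddCircle = 0 := by
    have h1 := integral_add_right_eq_self (μ := (AddCircle.haarAddCircle : Measure 𝕋))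
      (fun t : 𝕋 => fourier n t * (H t : ℂ)) h
    have h2 : (fun t : 𝕋 => fourier n (t + h) * (H (t + h) : ℂ))
        = fun t : 𝕋 => fourier n h * (fourier n t * (H t : ℂ)) := by
      funext t
      rw [fourier_add_arg, hH]; ring
    rw [h2, integral_const_mul] at h1
    have h3 : (fourier n h - 1) * ∫ t, fourier n t * (H t : ℂ) ∂AddCircle.haarAddCircle = 0 := by
      rw [sub_mul, h1]; ring
    exact (mul_eq_zero.mp h3).resolve_left (sub_ne_zero.mpr hn)
  have h4 := integral_re hint
  rw [key] at h4
  simpa using h4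

/-! ### Lacunary products -/

/-- The translation step `2π / (mν)`. -/
def step (m ν : ℕ) : 𝕋 := ((2 * Real.pi / (m * ν) : ℝ) : 𝕋)

lemma fourier_step_eq_one {m ν : ℕ} (hm : 0 < m) (hν : 3 ≤ ν) (k : ℕ) :
    fourier ((m * ν * k : ℕ) : ℤ) (step m ν) = 1 := by
  rw [step, fourier_coe_apply, Complex.exp_eq_one_iff]
  refine ⟨k, ?_⟩
  have h1 : (m : ℂ) ≠ 0 := by exact_mod_cast hm.ne'
  have h2 : (ν : ℂ) ≠ 0 := by exact_mod_cast (by omega : ν ≠ 0)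
  have h3 : (Real.pi : ℂ) ≠ 0 := by exact_mod_cast Real.pi_ne_zero
  push_cast
  field_simp

lemma fourier_step_ne_one {m ν : ℕ} (hm : 0 < m) (hν : 3 ≤ ν) {k : ℕ} (hk : 0 < k)
    (hk' : k < ν) : fourier ((k * m : ℕ) : ℤ) (step m ν) ≠ 1 := by
  rw [step, fourier_coe_apply, Ne, Complex.exp_eq_one_iff]
  rintro ⟨l, hl⟩
  have h1 : (m : ℂ) ≠ 0 := by exact_mod_cast hm.ne'
  have h2 : (ν : ℂ) ≠ 0 := by exact_mod_cast (by omega : ν ≠ 0)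
  have h3 : (Real.pi : ℂ) ≠ 0 := by exact_mod_cast Real.pi_ne_zero
  have h4 : (k : ℂ) = l * ν := by
    have h5 : (2 * Real.pi * Complex.I : ℂ) * k = (2 * Real.pi * Complex.I) * (l * ν) := by
      push_cast at hl
      field_simp at hl
      rw [hl]; ring
    exact mul_left_cancel₀ (by simp [h3]) h5
  have h6 : (k : ℤ) = l * ν := by exact_mod_cast h4
  have h7 : (ν : ℤ) ∣ k := ⟨l, by rw [h6]; ring⟩
  have h8 := Nat.le_of_dvd hk (by exact_mod_cast h7)
  omega

/-- The trigonometric polynomials `(1 + 2b cos) (c + d cos)` at the frequencies `m, mν, mν², …`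
are uncorrelated: the integral of their product is the product of their means `c + b d`. -/
lemma integral_prod_factor (b c d : ℝ) {ν : ℕ} (hν : 3 ≤ ν) (n : ℕ) :
    ∀ m : ℕ, 0 < m →
      ∫ t : 𝕋, ∏ j ∈ Finset.range n,
        ((1 + 2 * b * (fourier ((m * ν ^ j : ℕ) : ℤ) t).re) *
          (c + (fourier ((m * ν ^ j : ℕ) : ℤ) t).re * d)) ∂AddCircle.haarAddCircle
      = (c + b * d) ^ n := by
  induction n with
  | zero => intro m _; simp
  | succ n ih =>
    intro m hm
    set H : 𝕋 → ℝ := fun t => ∏ j ∈ Finset.range n,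
        ((1 + 2 * b * (fourier ((m * ν * ν ^ j : ℕ) : ℤ) t).re) *
          (c + (fourier ((m * ν * ν ^ j : ℕ) : ℤ) t).re * d)) with hHdef
    have hHc : Continuous H := by
      refine continuous_finsetProd _ fun j _ => ?_
      have := continuous_re_fourier ((m * ν * ν ^ j : ℕ) : ℤ)
      fun_prop
    have hHi : ∀ t, H (t + step m ν) = H t := by
      intro t
      refine Finset.prod_congr rfl fun j _ => ?_
      rw [fourier_add_arg, fourier_step_eq_one hm hν, mul_one]
    have z1 := integral_re_fourier_mul_eq_zero _ _
      (fourier_step_ne_one hm hν (k := 1) one_pos (by omega)) H hHc hHi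
    have z2 := integral_re_fourier_mul_eq_zero _ _
      (fourier_step_ne_one hm hν (k := 2) two_pos (by omega)) H hHc hHi
    have ihm : ∫ t, H t ∂AddCircle.haarAddCircle = (c + b * d) ^ n :=
      ih (m * ν) (Nat.mul_pos hm (by omega))
    have expand : ∀ t : 𝕋, (∏ j ∈ Finset.range (n + 1),
        ((1 + 2 * b * (fourier ((m * ν ^ j : ℕ) : ℤ) t).re) *
          (c + (fourier ((m * ν ^ j : ℕ) : ℤ) t).re * d)))
        = (c + b * d) * H t + (2 * b * c + d) * ((fourier ((1 * m : ℕ) : ℤ) t).re * H t)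
          + b * d * ((fourier ((2 * m : ℕ) : ℤ) t).re * H t) := by
      intro t
      have h1 : (∏ j ∈ Finset.range n,
        ((1 + 2 * b * (fourier ((m * ν ^ (j + 1) : ℕ) : ℤ) t).re) *
          (c + (fourier ((m * ν ^ (j + 1) : ℕ) : ℤ) t).re * d))) = H t := by
        refine Finset.prod_congr rfl fun j _ => ?_
        rw [show m * ν ^ (j + 1) = m * ν * ν ^ j by ring]
      have h2 := sq_re_fourier (m : ℤ) t
      rw [Finset.prod_range_succ', h1, pow_zero, mul_one, one_mul, Nat.cast_mul 2 m,
        Nat.cast_ofNat]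
      linear_combination (2 * b * d * H t) * h2
    simp_rw [expand]
    have c1 : Continuous fun t : 𝕋 => (fourier ((1 * m : ℕ) : ℤ) t).re * H t :=
      (continuous_re_fourier _).mul hHc
    have c2 : Continuous fun t : 𝕋 => (fourier ((2 * m : ℕ) : ℤ) t).re * H t :=
      (continuous_re_fourier _).mul hHc
    rw [integral_add, integral_add, integral_const_mul, integral_const_mul, integral_const_mul,
      z1, z2, ihm]
    · ring
    · exact integrable_of_continuous (by fun_prop)
    · exact integrable_of_continuous (by fun_prop)
    · exact integrable_of_continuous (by fun_prop)
    · exact integrable_of_continuous (by fun_prop)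

/-! ### Exponential moments and the tail bound -/

/-- A weak form of Hoeffding's lemma for the distribution on `{-1, 1}` with mean `b`. -/
lemma cosh_add_mul_sinh_le {b : ℝ} (hb : 0 ≤ b) (hb' : b ≤ 1 / 2) (μ : ℝ) :
    cosh μ + b * sinh μ ≤ exp (b * μ + μ ^ 2) := by
  have hc := Real.cosh_pos μ
  have hcu := Real.cosh_le_exp_half_sq μ
  have hkey : sinh μ / cosh μ ≤ μ + μ ^ 2 := by
    rw [div_le_iff₀ hc]
    -- `sinh μ = cosh μ - exp (-μ)`, and `(1 - μ - μ²) cosh μ ≤ exp (-μ - μ²) exp (μ² / 2)`.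
    have h1 := Real.cosh_sub_sinh μ
    have h2 : (1 - μ - μ ^ 2) * cosh μ ≤ exp (-μ) := by
      calc (1 - μ - μ ^ 2) * cosh μ ≤ exp (-(μ + μ ^ 2)) * cosh μ := by
            have := Real.add_one_le_exp (-(μ + μ ^ 2))
            exact mul_le_mul_of_nonneg_right (by linarith) hc.le
        _ ≤ exp (-(μ + μ ^ 2)) * exp (μ ^ 2 / 2) :=
            mul_le_mul_of_nonneg_left hcu (exp_pos _).le
        _ = exp (-(μ + μ ^ 2) + μ ^ 2 / 2) := (Real.exp_add _ _).symm
        _ ≤ exp (-μ) := by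
            apply Real.exp_le_exp.mpr
            nlinarith [sq_nonneg μ]
    linarith
  have e1 : cosh μ + b * sinh μ = cosh μ * (b * (sinh μ / cosh μ) + 1) := by
    field_simp
    ring
  rw [e1]
  calc cosh μ * (b * (sinh μ / cosh μ) + 1)
      ≤ cosh μ * exp (b * (sinh μ / cosh μ)) :=
        mul_le_mul_of_nonneg_left (Real.add_one_le_exp _) hc.le
    _ ≤ exp (μ ^ 2 / 2) * exp (b * (sinh μ / cosh μ)) :=
        mul_le_mul_of_nonneg_right hcu (exp_pos _).le
    _ = exp (μ ^ 2 / 2 + b * (sinh μ / cosh μ)) := (Real.exp_add _ _).symm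
    _ ≤ exp (b * μ + μ ^ 2) := by
        apply Real.exp_le_exp.mpr
        have := mul_le_mul_of_nonneg_left hkey hb
        nlinarith [sq_nonneg μ]

/-- Exponential moments of `∑ cos (νʲ t)` under the Riesz product. -/
lemma integral_riesz_mul_exp_le {b : ℝ} (hb : 0 ≤ b) (hb' : b ≤ 1 / 2) {ν : ℕ} (hν : 3 ≤ ν)
    (N : ℕ) (μ : ℝ) :
    ∫ t : 𝕋, (∏ j ∈ Finset.Icc 1 N, (1 + 2 * b * (fourier ((ν : ℤ) ^ j) t).re)) *
      exp (μ * ∑ j ∈ Finset.Icc 1 N, (fourier ((ν : ℤ) ^ j) t).re) ∂AddCircle.haarAddCircle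
    ≤ exp (N * (b * μ + μ ^ 2)) := by
  have hshift : ∀ F : ℕ → ℝ, ∏ j ∈ Finset.Icc 1 N, F j = ∏ j ∈ Finset.range N, F (j + 1) := by
    intro F
    rw [Finset.range_eq_Ico, Finset.prod_Ico_add' F 0 N 1]
    rfl
  have hcont := fun j : ℕ => continuous_re_fourier ((ν : ℤ) ^ j)
  have hpow : ∀ j : ℕ, ((ν : ℤ) ^ (j + 1)) = ((ν * ν ^ j : ℕ) : ℤ) := by
    intro j; push_cast; ring
  calc _ ≤ ∫ t : 𝕋, ∏ j ∈ Finset.Icc 1 N, ((1 + 2 * b * (fourier ((ν : ℤ) ^ j) t).re) *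
          (cosh μ + (fourier ((ν : ℤ) ^ j) t).re * sinh μ)) ∂AddCircle.haarAddCircle := by
        refine integral_mono (integrable_of_continuous (by fun_prop))
          (integrable_of_continuous (by fun_prop)) fun t => ?_
        simp only
        rw [Finset.mul_sum, Real.exp_sum, ← Finset.prod_mul_distrib]
        refine Finset.prod_le_prod (fun j _ => ?_) (fun j _ => ?_)
        all_goals
          have hx := abs_le.mp (abs_re_fourier_le_one ((ν : ℤ) ^ j) t)
          have h0 : 0 ≤ 1 + 2 * b * (fourier ((ν : ℤ) ^ j) t).re := by nlinarith
        · exact mul_nonneg h0 (exp_pos _).le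
        · refine mul_le_mul_of_nonneg_left ?_ h0
          have := Real.exp_mul_le_cosh_add_mul_sinh
            (abs_re_fourier_le_one ((ν : ℤ) ^ j) t) μ
          rwa [mul_comm] at this
    _ = (cosh μ + b * sinh μ) ^ N := by
        rw [← integral_prod_factor b (cosh μ) (sinh μ) hν N ν (by omega)]
        refine integral_congr_ae (Eventually.of_forall fun t => ?_)
        simp only
        rw [hshift]
        simp_rw [hpow]
    _ ≤ exp (b * μ + μ ^ 2) ^ N := by
        refine pow_le_pow_left₀ ?_ (cosh_add_mul_sinh_le hb hb' μ) N
        have h1 := Real.cosh_pos μ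
        have h2 := Real.cosh_add_sinh μ
        have h3 := Real.cosh_sub_sinh μ
        have h4 := exp_pos μ
        have h5 := exp_pos (-μ)
        rcases le_total 0 (sinh μ) with h | h <;> nlinarith
    _ = exp (N * (b * μ + μ ^ 2)) := by rw [← Real.exp_nat_mul]

/-- Exponential concentration for the Riesz product
`λ_s(t) = ∏_{j=1}^N (1 + 2sN^{−1/q} cos(νʲt))`: for `ν` large (depending on `N`),
the `λ_s`-mass of `{|X − s| > α}`, where `X(t) = N^{−1/p} ∑_{j=1}^N cos(νʲt)`, is at most
`3 exp(−α²N^{2/p−1}/8)`, uniformly in `s ∈ (2/5, 1/2)`. -/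
theorem statement7 (q p : ℝ) (hq : 2 < q) (hp : p = q / (q - 1))
    (N : ℕ) (hN : 0 < N) :
    ∃ ν₀ : ℕ, ∀ ν : ℕ, ν₀ ≤ ν →
      ∀ α : ℝ, 0 < α → ∀ s ∈ Set.Ioo (2 / 5 : ℝ) (1 / 2 : ℝ),
        (∫ t in {t : 𝕋 |
            α < |(N : ℝ) ^ (-(1 / p)) * ∑ j ∈ Finset.Icc 1 N, (fourier ((ν : ℤ) ^ j) t).re
                  - s|},
          (∏ j ∈ Finset.Icc 1 N,
            (1 + 2 * s * (N : ℝ) ^ (-(1 / q)) * (fourier ((ν : ℤ) ^ j) t).re))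
          ∂AddCircle.haarAddCircle)
        ≤ 3 * Real.exp (-(1 / 8) * α ^ 2 * (N : ℝ) ^ (2 / p - 1)) := by
  have hq0 : 0 < q := by linarith
  have hNpos : (0 : ℝ) < N := by exact_mod_cast hN
  have hN1 : (1 : ℝ) ≤ N := by exact_mod_cast hN
  have hp' : 1 / p = 1 - 1 / q := by
    rw [hp]
    have : q - 1 ≠ 0 := by linarith
    field_simp
  refine ⟨3, fun ν hν α hα s hs => ?_⟩
  obtain ⟨hs1, hs2⟩ := hs
  set a : ℝ := (N : ℝ) ^ (-(1 / q)) with ha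
  set L : ℝ := (N : ℝ) ^ (-(1 / p)) with hL
  have ha0 : 0 < a := Real.rpow_pos_of_pos hNpos _
  have hL0 : 0 < L := Real.rpow_pos_of_pos hNpos _
  have ha1 : a ≤ 1 := Real.rpow_le_one_of_one_le_of_nonpos hN1 (by
    have : 0 < 1 / q := by positivity
    linarith)
  have hLNa : L * N * a = 1 := by
    rw [hL, ha, ← Real.rpow_add_one hNpos.ne', ← Real.rpow_add hNpos, hp']
    ring_nf
    exact Real.rpow_zero _
  have hM : (N : ℝ) ^ (2 / p - 1) * (L ^ 2 * N) = 1 := by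
    rw [hL, ← Real.rpow_natCast, ← Real.rpow_mul hNpos.le, ← Real.rpow_add_one hNpos.ne',
      ← Real.rpow_add hNpos]
    have : 2 / p - 1 + (-(1 / p) * ((2 : ℕ) : ℝ) + 1) = 0 := by push_cast; ring
    rw [this, Real.rpow_zero]
  set b : ℝ := s * a with hb
  have hb0 : 0 ≤ b := mul_nonneg (by linarith) ha0.le
  have hb1 : b ≤ 1 / 2 := by nlinarith
  set S : 𝕋 → ℝ := fun t => ∑ j ∈ Finset.Icc 1 N, (fourier ((ν : ℤ) ^ j) t).re with hS
  set R : 𝕋 → ℝ := fun t => ∏ j ∈ Finset.Icc 1 N, (1 + 2 * b * (fourier ((ν : ℤ) ^ j) t).re)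
    with hR
  have hcont := fun j : ℕ => continuous_re_fourier ((ν : ℤ) ^ j)
  have hSc : Continuous S := by fun_prop
  have hRc : Continuous R := by fun_prop
  have hR0 : ∀ t, 0 ≤ R t := by
    intro t
    refine Finset.prod_nonneg fun j _ => ?_
    have hx := abs_le.mp (abs_re_fourier_le_one ((ν : ℤ) ^ j) t)
    nlinarith
  -- `μ` minimises the exponent `N μ² - μ α / L` of the Chernoff bound.
  set μ : ℝ := α / (2 * L * N) with hμ
  have hμ0 : 0 < μ := by positivity
  have hsN : s = L * (N * b) := by
    rw [hb]; linear_combination (-s) * hLNa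
  set K : ℝ := μ * α / L with hK
  have hKμ : K = 2 * (N * μ ^ 2) := by
    rw [hK, hμ]; field_simp
  have hKL : K * L = μ * α := by rw [hK]; field_simp
  set W : 𝕋 → ℝ := fun t => exp (-(μ * (N * b)) - K) * (R t * exp (μ * S t)) +
    exp (μ * (N * b) - K) * (R t * exp (-μ * S t)) with hW
  have hWc : Continuous W := by fun_prop
  have hW0 : ∀ t, 0 ≤ W t := fun t => by
    have := hR0 t
    positivity
  have hmeas : MeasurableSet {t : 𝕋 | α < |L * S t - s|} :=
    (isOpen_lt continuous_const (by fun_prop)).measurableSet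
  have hle : ∀ t ∈ {t : 𝕋 | α < |L * S t - s|}, R t ≤ W t := by
    intro t ht
    have hp1 : 0 ≤ exp (-(μ * (N * b)) - K) * (R t * exp (μ * S t)) := by
      have := hR0 t
      positivity
    have hp2 : 0 ≤ exp (μ * (N * b) - K) * (R t * exp (-μ * S t)) := by
      have := hR0 t
      positivity
    rcases lt_abs.mp (show α < |L * S t - s| from ht) with h | h
    · have h1 : 0 ≤ -(μ * (N * b)) - K + μ * S t := by
        refine nonneg_of_mul_nonneg_left (b := L) ?_ hL0
        have := mul_le_mul_of_nonneg_left h.le hμ0.le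
        rw [hsN] at this
        linarith
      have h2 : R t * 1 ≤ R t * exp (-(μ * (N * b)) - K + μ * S t) :=
        mul_le_mul_of_nonneg_left (Real.one_le_exp h1) (hR0 t)
      rw [Real.exp_add] at h2
      simp only [hW]
      linarith
    · have h1 : 0 ≤ μ * (N * b) - K + -μ * S t := by
        refine nonneg_of_mul_nonneg_left (b := L) ?_ hL0
        have := mul_le_mul_of_nonneg_left h.le hμ0.le
        rw [hsN] at this
        linarith
      have h2 : R t * 1 ≤ R t * exp (μ * (N * b) - K + -μ * S t) :=
        mul_le_mul_of_nonneg_left (Real.one_le_exp h1) (hR0 t)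
      rw [Real.exp_add] at h2
      simp only [hW]
      linarith
  have hWint : ∫ t, W t ∂AddCircle.haarAddCircle ≤ 2 * exp (-(N * μ ^ 2)) := by
    rw [hW, integral_add (integrable_of_continuous (by fun_prop))
      (integrable_of_continuous (by fun_prop)), integral_const_mul, integral_const_mul]
    have i1 := mul_le_mul_of_nonneg_left (integral_riesz_mul_exp_le hb0 hb1 hν N μ)
      (exp_pos (-(μ * (N * b)) - K)).le
    have i2 := mul_le_mul_of_nonneg_left (integral_riesz_mul_exp_le hb0 hb1 hν N (-μ))
      (exp_pos (μ * (N * b) - K)).le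
    rw [← Real.exp_add] at i1 i2
    have e1 : -(μ * (N * b)) - K + N * (b * μ + μ ^ 2) = -(N * μ ^ 2) := by rw [hKμ]; ring
    have e2 : μ * (N * b) - K + N * (b * -μ + (-μ) ^ 2) = -(N * μ ^ 2) := by rw [hKμ]; ring
    rw [e1] at i1
    rw [e2] at i2
    linarith
  have hexp : N * μ ^ 2 = 1 / 4 * α ^ 2 * (N : ℝ) ^ (2 / p - 1) := by
    have h1 : (N : ℝ) ^ (2 / p - 1) = 1 / (L ^ 2 * N) := eq_one_div_of_mul_eq_one_left hM
    rw [h1, hμ]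
    field_simp
    norm_num
  have hfin : 2 * exp (-(N * μ ^ 2)) ≤ 3 * exp (-(1 / 8) * α ^ 2 * (N : ℝ) ^ (2 / p - 1)) := by
    have h0 : 0 ≤ α ^ 2 * (N : ℝ) ^ (2 / p - 1) := by positivity
    have h1 : exp (-(N * μ ^ 2)) ≤ exp (-(1 / 8) * α ^ 2 * (N : ℝ) ^ (2 / p - 1)) := by
      apply Real.exp_le_exp.mpr
      rw [hexp]
      linarith
    have := exp_pos (-(1 / 8) * α ^ 2 * (N : ℝ) ^ (2 / p - 1))
    linarith
  calc _ = ∫ t in {t : 𝕋 | α < |L * S t - s|}, R t ∂AddCircle.haarAddCircle := by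
        simp only [hR, hS, hb, mul_assoc]
    _ ≤ ∫ t in {t : 𝕋 | α < |L * S t - s|}, W t ∂AddCircle.haarAddCircle :=
        setIntegral_mono_on (integrable_of_continuous hRc).integrableOn
          (integrable_of_continuous hWc).integrableOn hmeas hle
    _ ≤ ∫ t, W t ∂AddCircle.haarAddCircle :=
        setIntegral_le_integral (integrable_of_continuous hWc) (Eventually.of_forall hW0)
    _ ≤ _ := hWint.trans hfin
end
end

section
/- Let q > 2. The set 𝒢_q of all pairs (K, c), where K is a nonempty compact subset of 𝕋 and c ∈ ℓ_q(ℤ) is the coefficient sequence of a distribution in A_q supported by K, is a closed subset of the product metric space 𝒦(𝕋) × ℓ_q(ℤ) with metric d((K,c),(K′,c′)) = δ(K,K′) + ‖c − c′‖_{ℓ_q}; in particular (𝒢_q, d) is a complete metric space. -/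
/-!
The condition defining `𝒢_q` can be tested one pair `(φ, U)` at a time, with `φ` smooth and zero
on the open set `U`: either `K ⊄ U`, or `∑ c(n) φ̂(-n) = 0`. The first alternative is closed
since `{K | K ⊆ U}` is open for the Hausdorff metric. The second is closed since `φ̂` is absolutely
summable (`summable_norm_fourierCoeff_of_smooth`, two integrations by parts), and coordinates
of `c` are bounded by `‖c‖`, so that the pairing with `φ̂` is continuous on `ℓ_q`
(`continuous_tsum_mul_lp`). So `𝒢_q` is an intersection of closed sets; completeness follows
from that of the ambient product.
-/

open MeasureTheory Real Filter Topology

noncomputable section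

local notation "𝕋" => AddCircle (2 * Real.pi)

/-- Integration by parts on a period: there is no boundary term, so differentiation costs
exactly one factor `n` on the Fourier side. The endpoint is written `0 + 2 * π`, the form produced by
`fourierCoeff_eq_intervalIntegral` at `a = 0`. -/
lemma norm_fourierCoeffOn_of_periodic {f : ℝ → ℂ} (hf : ContDiff ℝ 1 f)
    (hp : Function.Periodic f (2 * π)) (hab : (0 : ℝ) < 0 + 2 * π) {n : ℤ} (hn : n ≠ 0) :
    ‖fourierCoeffOn hab f n‖ = ‖fourierCoeffOn hab (deriv f) n‖ / |(n : ℝ)| := by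
  have hc : Continuous (deriv f) := hf.continuous_deriv le_rfl
  rw [fourierCoeffOn_of_hasDerivAt hab hn
    (fun x _ => (hf.differentiable (by norm_num) x).hasDerivAt) (hc.intervalIntegrable _ _),
    hp 0]
  have hn' : |(n : ℝ)| ≠ 0 := by simpa using hn
  have hpi : |π| ≠ 0 := by simp [Real.pi_ne_zero]
  simp
  field_simp

/-- The Fourier coefficients of a function on `[0, 2π]` are bounded. -/
lemma exists_norm_fourierCoeffOn_le (f : ℝ → ℂ) (hab : (0 : ℝ) < 0 + 2 * π) :
    ∃ C : ℝ, ∀ n : ℤ, ‖fourierCoeffOn hab f n‖ ≤ C := by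
  refine ⟨‖(1 / (0 + 2 * π - 0) : ℝ)‖ * ∫ x in (0 : ℝ)..(0 + 2 * π), ‖f x‖, fun n => ?_⟩
  rw [fourierCoeffOn_eq_integral, norm_smul]
  gcongr
  refine (intervalIntegral.norm_integral_le_integral_norm hab.le).trans_eq ?_
  simp only [norm_smul, fourier_apply, Circle.norm_coe, one_mul]

/-- Fourier coefficients of a smooth function decay like `n⁻²`, hence are absolutely summable. -/
lemma summable_norm_fourierCoeff_of_smooth {φ : 𝕋 → ℂ} (hφ : SmoothCircle φ) :
    Summable fun n : ℤ => ‖fourierCoeff φ n‖ := by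
  have hab : (0 : ℝ) < 0 + 2 * π := by positivity
  set f : ℝ → ℂ := fun x => φ (x : 𝕋) with hf_def
  have hf : ContDiff ℝ 2 f := contDiff_infty.1 hφ 2
  have hp : Function.Periodic f (2 * π) := fun x => by simp [hf_def]
  have hf1 : ContDiff ℝ 1 (deriv f) := hf.deriv'
  have hp1 : Function.Periodic (deriv f) (2 * π) := fun x => by
    rw [← deriv_comp_add_const]
    exact congrArg (fun g => deriv g x) (funext hp)
  obtain ⟨C, hC⟩ := exists_norm_fourierCoeffOn_le (deriv (deriv f)) hab
  have hcoe : ∀ n, fourierCoeff φ n = fourierCoeffOn hab f n := fun n => by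
    rw [fourierCoeffOn_eq_integral, fourierCoeff_eq_intervalIntegral _ _ 0, add_sub_cancel_left]
  refine Summable.of_norm_bounded_eventually
    ((Real.summable_one_div_int_pow (p := 2)).2 (by norm_num) |>.mul_left C) ?_
  filter_upwards [(Set.finite_singleton (0 : ℤ)).compl_mem_cofinite] with n hn
  have hn : n ≠ 0 := by simpa using hn
  rw [norm_norm, hcoe, norm_fourierCoeffOn_of_periodic (hf.of_le (by norm_num)) hp hab hn,
    norm_fourierCoeffOn_of_periodic hf1 hp1 hab hn, div_div, ← sq, sq_abs, mul_one_div]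
  gcongr
  exact hC n

/-- An absolutely summable sequence defines a continuous functional on `ℓ_p`. -/
lemma continuous_tsum_mul_lp {p : ENNReal} [Fact (1 ≤ p)] {a : ℤ → ℂ}
    (ha : Summable fun n => ‖a n‖) :
    Continuous fun c : lp (fun _ : ℤ => ℂ) p => ∑' n, c n * a n := by
  have hp : p ≠ 0 := (zero_lt_one.trans_le Fact.out).ne'
  refine continuous_iff_continuousAt.2 fun c => ?_
  -- Near `c` every coordinate is at most `‖c‖ + 1`, which dominates the series.
  refine tendsto_tsum_of_dominated_convergence (ha.mul_left (‖c‖ + 1)) (fun n => ?_) ?_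
  · exact ((lp.lipschitzWith_one_eval p n).continuous.tendsto c).mul_const _
  · filter_upwards [continuous_norm.continuousAt.eventually_lt continuousAt_const
      (lt_add_one ‖c‖)] with d hd n
    rw [norm_mul]
    gcongr
    exact (lp.norm_apply_le_norm hp d n).trans hd.le

/-- The space `𝒢_q` of pairs `(K, c)`, where `K` is a nonempty compact subset of `𝕋` and
`c ∈ ℓ_q(ℤ)` is the coefficient sequence of a distribution in `A_q` supported by `K`, is
closed in the product of the space of nonempty compact subsets of `𝕋` (with the Hausdorff
metric) and `ℓ_q(ℤ)`; in particular it is a complete metric space. -/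
theorem statement18 (q : ℝ) (hq : 2 < q) :
    letI : Fact (1 ≤ ENNReal.ofReal q) :=
      ⟨by rw [ENNReal.one_le_ofReal]; linarith⟩
    IsClosed {x : TopologicalSpace.NonemptyCompacts 𝕋 ×
        lp (fun _ : ℤ => ℂ) (ENNReal.ofReal q) |
        IsDistCoeffOn (fun n => x.2 n) (↑x.1 : Set 𝕋)} ∧
    IsComplete {x : TopologicalSpace.NonemptyCompacts 𝕋 ×
        lp (fun _ : ℤ => ℂ) (ENNReal.ofReal q) |
        IsDistCoeffOn (fun n => x.2 n) (↑x.1 : Set 𝕋)} := by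
  have hq1 : Fact (1 ≤ ENNReal.ofReal q) :=
    ⟨by rw [ENNReal.one_le_ofReal]; linarith⟩
  have hclosed : IsClosed {x : TopologicalSpace.NonemptyCompacts 𝕋 ×
        lp (fun _ : ℤ => ℂ) (ENNReal.ofReal q) |
        IsDistCoeffOn (fun n => x.2 n) (↑x.1 : Set 𝕋)} := by
    have heq : {x : TopologicalSpace.NonemptyCompacts 𝕋 ×
        lp (fun _ : ℤ => ℂ) (ENNReal.ofReal q) |
        IsDistCoeffOn (fun n => x.2 n) (↑x.1 : Set 𝕋)} =
        ⋂ (φ : 𝕋 → ℂ) (_ : SmoothCircle φ) (U : Set 𝕋) (_ : IsOpen U) (_ : ∀ t ∈ U, φ t = 0),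
          {x | (x.1 : Set 𝕋) ⊆ U → ∑' n : ℤ, x.2 n * fourierCoeff φ (-n) = 0} := by
      ext x
      simp only [Set.mem_ofPred_eq, Set.mem_iInter, IsDistCoeffOn]
      exact ⟨fun h φ hφ U hU h0 hK => h φ hφ ⟨U, hU, hK, h0⟩,
        fun h φ hφ ⟨U, hU, hK, h0⟩ => h φ hφ U hU h0 hK⟩
    rw [heq]
    refine isClosed_iInter fun φ => isClosed_iInter fun hφ => isClosed_iInter fun U =>
      isClosed_iInter fun hU => isClosed_iInter fun _ => ?_
    have ha : Summable fun n : ℤ => ‖fourierCoeff φ (-n)‖ :=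
      (Equiv.neg ℤ).summable_iff.2 (summable_norm_fourierCoeff_of_smooth hφ)
    exact isClosed_imp
      ((TopologicalSpace.NonemptyCompacts.isOpen_subsets_of_isOpen hU).preimage continuous_fst)
      (isClosed_eq ((continuous_tsum_mul_lp ha).comp continuous_snd) continuous_const)
  exact ⟨hclosed, hclosed.isComplete⟩
end
end
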